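/- Let F be a field of characteristic zero and let m, n be natural numbers, not both zero. Consider the matrix superalgebra M_{m|n}(F), i.e., the algebra of (m+n)×(m+n) matrices over F, indexed by Fin m ⊕ Fin n, with ℤ/2-grading in which a matrix is even if it preserves the two blocks (both nonzero entries have row and column indices in the same summand) and odd if it exchanges them. Then the F-linear span of the set of supercommutators {XY − (−1)^{|X||Y|}·YX : X, Y homogeneous} equals the kernel of the supertrace map str : M_{m|n}(F) → F, str(X) = Σ_{i ∈ Fin m} X_{ii} − Σ_{j ∈ Fin n} X_{jj}. -/

import Mathlib

/-- in the matrix superalgebra `M_{m|n}(F)` over a field `F` of characteristic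
zero (with `m`, `n` not both zero), the `F`-linear span of the supercommutators
`XY − (−1)^{|X||Y|} YX` of homogeneous matrices `X`, `Y` equals the kernel of the supertrace. -/
theorem span_supercommutators_eq_ker_supertrace
    (F : Type*) [Field F] [CharZero F] (m n : ℕ) (hmn : m ≠ 0 ∨ n ≠ 0)
    (par : Fin m ⊕ Fin n → ZMod 2)
    (hpar : par = Sum.elim (fun _ => (0 : ZMod 2)) (fun _ => (1 : ZMod 2))) :
    ∀ X : Matrix (Fin m ⊕ Fin n) (Fin m ⊕ Fin n) F,
      X ∈ Submodule.span F
          {Z : Matrix (Fin m ⊕ Fin n) (Fin m ⊕ Fin n) F |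
            ∃ (Y₁ Y₂ : Matrix (Fin m ⊕ Fin n) (Fin m ⊕ Fin n) F) (ε δ : ZMod 2),
              (∀ a b, Y₁ a b ≠ 0 → par a + par b = ε) ∧
              (∀ a b, Y₂ a b ≠ 0 → par a + par b = δ) ∧
              Z = Y₁ * Y₂ - ((-1 : F) ^ (ε.val * δ.val)) • (Y₂ * Y₁)} ↔
        (∑ i : Fin m, X (Sum.inl i) (Sum.inl i)) -
            (∑ j : Fin n, X (Sum.inr j) (Sum.inr j)) = 0 := by
  classical
  intro X
  subst hpar
  set par : Fin m ⊕ Fin n → ZMod 2 :=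
    Sum.elim (fun _ => (0 : ZMod 2)) (fun _ => (1 : ZMod 2)) with hpar
  set S := {Z : Matrix (Fin m ⊕ Fin n) (Fin m ⊕ Fin n) F |
            ∃ (Y₁ Y₂ : Matrix (Fin m ⊕ Fin n) (Fin m ⊕ Fin n) F) (ε δ : ZMod 2),
              (∀ a b, Y₁ a b ≠ 0 → par a + par b = ε) ∧
              (∀ a b, Y₂ a b ≠ 0 → par a + par b = δ) ∧
              Z = Y₁ * Y₂ - ((-1 : F) ^ (ε.val * δ.val)) • (Y₂ * Y₁)} with hS
  let s : Fin m ⊕ Fin n → F := Sum.elim (fun _ => 1) (fun _ => -1)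
  have hss : ∀ a, s a * s a = 1 := by
    rintro (a | a) <;> simp [s]
  have hsign : ∀ a b, (-1 : F) ^ ((par a + par b).val * (par a + par b).val) = s a * s b := by
    have h2 : (1 + 1 : ZMod 2) = 0 := by decide
    rintro (a | a) (b | b) <;> simp [s, par, h2, ZMod.val_one]
  have hstr : ∀ X : Matrix (Fin m ⊕ Fin n) (Fin m ⊕ Fin n) F,
      (∑ i : Fin m, X (Sum.inl i) (Sum.inl i)) - (∑ j : Fin n, X (Sum.inr j) (Sum.inr j))
        = ∑ a, s a * X a a := by
    intro X
    simp [s, Fintype.sum_sum_type, sub_eq_add_neg]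
  rw [hstr]
  constructor
  · intro hX
    induction hX using Submodule.span_induction with
    | mem Z hZ =>
      obtain ⟨Y₁, Y₂, ε, δ, h1, h2, rfl⟩ := hZ
      have e1 : ∑ a, s a * (Y₁ * Y₂ - ((-1 : F) ^ (ε.val * δ.val)) • (Y₂ * Y₁)) a a
          = (∑ a, ∑ b, s a * (Y₁ a b * Y₂ b a))
            - ∑ a, ∑ b, s a * ((-1 : F) ^ (ε.val * δ.val) * (Y₂ a b * Y₁ b a)) := by
        simp only [Matrix.sub_apply, Matrix.smul_apply, Matrix.mul_apply, smul_eq_mul, mul_sub,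
          Finset.sum_sub_distrib, Finset.mul_sum]
      rw [e1, sub_eq_zero]
      conv_rhs => rw [Finset.sum_comm]
      refine Finset.sum_congr rfl fun a _ => Finset.sum_congr rfl fun b _ => ?_
      by_cases ha : Y₁ a b = 0
      · simp [ha]
      by_cases hb : Y₂ b a = 0
      · simp [hb]
      have hε := h1 a b ha
      have hδ := h2 b a hb
      rw [add_comm] at hδ
      rw [← hε, ← hδ, hsign]
      linear_combination (-(s a * Y₁ a b * Y₂ b a)) * hss b
    | zero => simp
    | add x y _ _ hx hy => simp [mul_add, Finset.sum_add_distrib, hx, hy]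
    | smul c x _ hx =>
      have : ∑ a, s a * (c • x) a a = c * ∑ a, s a * x a a := by
        rw [Finset.mul_sum]
        refine Finset.sum_congr rfl fun a _ => ?_
        simp only [Matrix.smul_apply, smul_eq_mul]
        ring
      rw [this, hx, mul_zero]
  · intro hX
    obtain ⟨o⟩ : Nonempty (Fin m ⊕ Fin n) := by
      rcases hmn with h | h
      · exact ⟨Sum.inl ⟨0, Nat.pos_of_ne_zero h⟩⟩
      · exact ⟨Sum.inr ⟨0, Nat.pos_of_ne_zero h⟩⟩
    have hpE : ∀ c d a b, Matrix.single c d (1 : F) a b ≠ 0 → par a + par b = par c + par d := by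
      intro c d a b h
      rw [Matrix.single_apply] at h
      split_ifs at h with h'
      · rw [h'.1, h'.2]
      · exact absurd rfl h
    have hoff : ∀ a b, a ≠ b → Matrix.single a b (1 : F) ∈ Submodule.span F S := by
      intro a b hab
      refine Submodule.subset_span ⟨Matrix.single a a 1, Matrix.single a b 1, _, _,
        hpE a a, hpE a b, ?_⟩
      simp [Matrix.single_mul_single_of_ne _ _ _ _ hab.symm]
    have hdiag : ∀ a, Matrix.single a a (1 : F) - (s a * s o) • Matrix.single o o (1 : F)
        ∈ Submodule.span F S := by
      intro a
      refine Submodule.subset_span ⟨Matrix.single a o 1, Matrix.single o a 1, par a + par o,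
        par a + par o, hpE a o, ?_, ?_⟩
      · intro c d h
        rw [hpE o a c d h, add_comm]
      · rw [hsign]
        simp
    have key : ∀ a b, Matrix.single a b (X a b) -
        (if a = b then (X a b * (s a * s o)) • Matrix.single o o (1 : F) else 0)
        ∈ Submodule.span F S := by
      intro a b
      have hx : Matrix.single a b (X a b) = X a b • Matrix.single a b (1 : F) := by simp
      rw [hx]
      split_ifs with h
      · subst h
        rw [mul_smul, ← smul_sub]
        exact Submodule.smul_mem _ _ (hdiag a)
      · rw [sub_zero]
        exact Submodule.smul_mem _ _ (hoff a b h)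
    have hsum := Submodule.sum_mem (Submodule.span F S) (t := Finset.univ)
      (fun a _ => Submodule.sum_mem (Submodule.span F S) (t := Finset.univ)
        (fun b _ => key a b))
    simp only [Finset.sum_sub_distrib, Finset.sum_ite_eq, Finset.mem_univ, if_true] at hsum
    rw [← Matrix.matrix_eq_sum_single, ← Finset.sum_smul] at hsum
    have h0 : ∑ a, X a a * (s a * s o) = 0 := by
      have : ∑ a, X a a * (s a * s o) = (∑ a, s a * X a a) * s o := by
        rw [Finset.sum_mul]
        exact Finset.sum_congr rfl fun a _ => by ring
      rw [this, hX, zero_mul]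
    rwa [h0, zero_smul, sub_zero] at hsum
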